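/- (Consistency of the augmented mixed formulation.) Let σ : Ω → M_d(ℝ) be C¹ with ∫_Ω ν^{-1}|σ|_F² < ∞ and ∫_Ω (θ/ν)|∇·σ|² < ∞, let u : Ω → ℝ^d be C¹ with ∫_Ω ν|∇u|_F² < ∞, and let f : Ω → ℝ^d be continuous, satisfying ∇·σ = −f and Aσ = ν·ε(u) pointwise on Ω. Then σ(x) is a symmetric matrix for every x ∈ Ω, tr(ε(u)) = 0 on Ω, and for every admissible pair (τ,v): B_θ((σ,u),(τ,v)) = 2∫_Ω f·v dx − ∫_Ω (θ/ν) f·(∇·τ) dx. -/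

import Mathlib

/-!
Symmetry of `σ` and incompressibility of `u` are pointwise consequences of `Aσ = ν ε(u)`: the
right-hand side is symmetric, `A` leaves off-diagonal entries unchanged, and `tr (Aσ) = 0` while
`ν > 0`.

In `B_θ((σ,u),(τ,v))`, the integrands `ν⁻¹⟨Aσ,τ⟩`, `⟨ε(u),τ⟩` and `⟨Aτ,ε(u)⟩` coincide on `Ω`, the
last because `ε(u)` is trace-free (`fro_devM_of_trace_zero`), so their integrals enter with total
weight `1 - 2 + 1 = 0`; likewise `⟨Aσ,ε(v)⟩ = ν⟨ε(u),ε(v)⟩`. The divergence term is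
`-∫ (θ/ν) f·(∇·τ)` by the momentum equation. What remains is
`∫ ⟨ε(v),σ⟩ = ∫ f·v`, which is integration by parts
(`integral_fro_epsV`): `⟨ε(v),σ⟩ = ∑ᵢⱼ ∂ⱼ(vᵢ σᵢⱼ) + f·v` for symmetric `σ`, and each `vᵢ σᵢⱼ` is a
compactly supported `C¹` function on the whole space.
-/

open MeasureTheory

noncomputable section

/-- Frobenius inner product of two `d × d` arrays. -/
def fro {d : ℕ} (S T : Fin d → Fin d → ℝ) : ℝ := ∑ i, ∑ j, S i j * T i j

/-- The deviatoric map `A M = M − (tr M / d) • I`. -/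
def devM {d : ℕ} (M : Fin d → Fin d → ℝ) : Fin d → Fin d → ℝ :=
  fun i j => M i j - ((∑ k, M k k) / (d : ℝ)) * (if i = j then 1 else 0)

/-- Partial derivative of a scalar field in the `j`-th coordinate direction. -/
def pd {d : ℕ} (f : (Fin d → ℝ) → ℝ) (x : Fin d → ℝ) (j : Fin d) : ℝ :=
  fderiv ℝ f x (Pi.single j 1)

/-- Jacobian matrix `(∂v_i/∂x_j)` of a vector field. -/
def jac {d : ℕ} (v : (Fin d → ℝ) → Fin d → ℝ) (x : Fin d → ℝ) : Fin d → Fin d → ℝ :=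
  fun i j => pd (fun y => v y i) x j

/-- Symmetric gradient `ε(v) = (∇v + (∇v)^T)/2`. -/
def epsV {d : ℕ} (v : (Fin d → ℝ) → Fin d → ℝ) (x : Fin d → ℝ) : Fin d → Fin d → ℝ :=
  fun i j => (jac v x i j + jac v x j i) / 2

/-- Row-wise divergence `(∇·τ)_i = Σ_j ∂_j τ_{ij}` of a matrix-valued field. -/
def divT {d : ℕ} (τ : (Fin d → ℝ) → Fin d → Fin d → ℝ) (x : Fin d → ℝ) (i : Fin d) : ℝ :=
  ∑ j, pd (fun y => τ y i j) x j

/-- A pair `(τ, v)` is admissible: `τ` is `C¹` on `Ω`, `v` is `C¹` with compact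
support contained in `Ω`, and the four weighted integrals are finite. -/
def Admissible {d : ℕ} (Ω : Set (Fin d → ℝ)) (ν θ : (Fin d → ℝ) → ℝ)
    (τ : (Fin d → ℝ) → Fin d → Fin d → ℝ) (v : (Fin d → ℝ) → Fin d → ℝ) : Prop :=
  (∀ i j, ContDiffOn ℝ 1 (fun x => τ x i j) Ω) ∧
    ContDiff ℝ 1 v ∧ HasCompactSupport v ∧ tsupport v ⊆ Ω ∧
    IntegrableOn (fun x => (ν x)⁻¹ * fro (τ x) (τ x)) Ω ∧
    IntegrableOn (fun x => ν x * fro (jac v x) (jac v x)) Ω ∧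
    IntegrableOn (fun x => (ν x / θ x) * ∑ i, (v x i) ^ 2) Ω ∧
    IntegrableOn (fun x => (θ x / ν x) * ∑ i, (divT τ x i) ^ 2) Ω

/-- The augmented (non-symmetric) bilinear form `B_θ`. -/
def Bform {d : ℕ} (Ω : Set (Fin d → ℝ)) (ν θ : (Fin d → ℝ) → ℝ)
    (χ : (Fin d → ℝ) → Fin d → Fin d → ℝ) (w : (Fin d → ℝ) → Fin d → ℝ)
    (τ : (Fin d → ℝ) → Fin d → Fin d → ℝ) (v : (Fin d → ℝ) → Fin d → ℝ) : ℝ :=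
  (∫ x in Ω, (ν x)⁻¹ * fro (devM (χ x)) (τ x))
    - 2 * (∫ x in Ω, fro (epsV w x) (τ x))
    + 2 * (∫ x in Ω, fro (epsV v x) (χ x))
    - (∫ x in Ω, fro (devM (χ x)) (epsV v x))
    + (∫ x in Ω, fro (devM (τ x)) (epsV w x))
    + (∫ x in Ω, ν x * fro (epsV w x) (epsV v x))
    + (∫ x in Ω, (θ x / ν x) * ∑ i, divT χ x i * divT τ x i)

/-- The weighted energy norm `|||(τ,v)|||_{eg,θ}`. -/
def normEg {d : ℕ} (Ω : Set (Fin d → ℝ)) (ν θ : (Fin d → ℝ) → ℝ)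
    (τ : (Fin d → ℝ) → Fin d → Fin d → ℝ) (v : (Fin d → ℝ) → Fin d → ℝ) : ℝ :=
  Real.sqrt ((∫ x in Ω, ν x * fro (epsV v x) (epsV v x))
    + (∫ x in Ω, (ν x)⁻¹ * fro (devM (τ x)) (devM (τ x)))
    + (∫ x in Ω, (θ x / ν x) * ∑ i, (divT τ x i) ^ 2))

/-- The weighted full norm `|||(τ,v)|||_{full,θ}`. -/
def normFull {d : ℕ} (Ω : Set (Fin d → ℝ)) (ν θ : (Fin d → ℝ) → ℝ)
    (τ : (Fin d → ℝ) → Fin d → Fin d → ℝ) (v : (Fin d → ℝ) → Fin d → ℝ) : ℝ :=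
  Real.sqrt ((∫ x in Ω, ν x * fro (jac v x) (jac v x))
    + (∫ x in Ω, (ν x / θ x) * ∑ i, (v x i) ^ 2)
    + (∫ x in Ω, (ν x)⁻¹ * fro (τ x) (τ x))
    + (∫ x in Ω, (θ x / ν x) * ∑ i, (divT τ x i) ^ 2))

lemma fro_comm {d : ℕ} (S T : Fin d → Fin d → ℝ) : fro S T = fro T S := by
  simp only [fro, mul_comm]

lemma trace_devM {d : ℕ} (M : Fin d → Fin d → ℝ) : ∑ i, devM M i i = 0 := by
  rcases Nat.eq_zero_or_pos d with rfl | hd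
  · simp
  · have : (d : ℝ) ≠ 0 := by positivity
    simp only [devM, if_true, mul_one, Finset.sum_sub_distrib, Finset.sum_const,
      Finset.card_univ, Fintype.card_fin, nsmul_eq_mul]
    field_simp
    ring

lemma fro_devM_of_trace_zero {d : ℕ} (M E : Fin d → Fin d → ℝ) (hE : ∑ i, E i i = 0) :
    fro (devM M) E = fro M E := by
  simp only [fro, devM, sub_mul, Finset.sum_sub_distrib, mul_ite, mul_one, mul_zero, ite_mul,
    zero_mul, Finset.sum_ite_eq, Finset.mem_univ, if_true]
  rw [← Finset.mul_sum, hE]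
  ring

/-- Against a symmetric matrix the symmetric gradient may be replaced by the full gradient. -/
lemma fro_epsV_of_symm {d : ℕ} (v : (Fin d → ℝ) → Fin d → ℝ) (x : Fin d → ℝ)
    (S : Fin d → Fin d → ℝ) (hS : ∀ i j, S i j = S j i) :
    fro (epsV v x) S = fro (jac v x) S := by
  have h : fro (fun i j => jac v x j i) S = fro (jac v x) S := by
    unfold fro
    rw [Finset.sum_comm]
    exact Finset.sum_congr rfl fun i _ => Finset.sum_congr rfl fun j _ => by rw [hS]
  have h2 : fro (epsV v x) S = (fro (jac v x) S + fro (fun i j => jac v x j i) S) / 2 := by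
    simp only [fro, epsV, ← Finset.sum_add_distrib, Finset.sum_div]
    exact Finset.sum_congr rfl fun i _ => Finset.sum_congr rfl fun j _ => by ring
  rw [h2, h]
  ring

/-- Multiplying by a `C¹` function supported inside `Ω` turns a function that is `C¹` only on `Ω`
into one that is `C¹` on the whole space. -/
lemma contDiff_mul_of_tsupport_subset {d : ℕ} {Ω : Set (Fin d → ℝ)} (hΩ : IsOpen Ω)
    {a b : (Fin d → ℝ) → ℝ} (ha : ContDiff ℝ 1 a) (hsub : tsupport a ⊆ Ω)
    (hb : ContDiffOn ℝ 1 b Ω) : ContDiff ℝ 1 (fun x => a x * b x) := by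
  rw [contDiff_iff_contDiffAt]
  intro x
  by_cases hx : x ∈ Ω
  · exact ha.contDiffAt.mul (hb.contDiffAt (hΩ.mem_nhds hx))
  · have h0 : a =ᶠ[nhds x] 0 := notMem_tsupport_iff_eventuallyEq.1 fun h => hx (hsub h)
    refine (contDiffAt_const (c := (0 : ℝ))).congr_of_eventuallyEq ?_
    filter_upwards [h0] with y hy
    simp [hy]

lemma integrable_pd {d : ℕ} {g : (Fin d → ℝ) → ℝ} (hg : ContDiff ℝ 1 g)
    (hc : HasCompactSupport g) (j : Fin d) : Integrable (fun x => pd g x j) :=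
  ((hg.continuous_fderiv one_ne_zero).clm_apply continuous_const).integrable_of_hasCompactSupport
    (hc.fderiv_apply ℝ _)

lemma integral_pd_eq_zero {d : ℕ} {g : (Fin d → ℝ) → ℝ} (hg : ContDiff ℝ 1 g)
    (hc : HasCompactSupport g) (j : Fin d) : ∫ x, pd g x j = 0 := by
  -- Integration by parts against the constant function `1`.
  have h := integral_mul_fderiv_eq_neg_fderiv_mul_of_integrable (μ := volume)
    (f := fun _ : Fin d → ℝ => (1 : ℝ)) (g := g) (v := Pi.single j 1) (by simp)
    (by simpa [pd] using integrable_pd hg hc j)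
    (by simpa using hg.continuous.integrable_of_hasCompactSupport hc)
    (fun x _ => by fun_prop) (fun x _ => hg.differentiable one_ne_zero x)
  simpa [pd] using h

/-- Integration by parts for the stress term: the weak form of `-∇·σ = f`, tested with `v`. -/
lemma integral_fro_epsV {d : ℕ} {Ω : Set (Fin d → ℝ)} (hΩ : IsOpen Ω)
    {σ : (Fin d → ℝ) → Fin d → Fin d → ℝ}
    (hσ : ∀ i j, ContDiffOn ℝ 1 (fun x => σ x i j) Ω)
    (hsymm : ∀ x ∈ Ω, ∀ i j, σ x i j = σ x j i)
    {f : (Fin d → ℝ) → Fin d → ℝ} (hf : ContinuousOn f Ω)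
    (hmom : ∀ x ∈ Ω, ∀ i, divT σ x i = -f x i)
    {v : (Fin d → ℝ) → Fin d → ℝ} (hv : ContDiff ℝ 1 v) (hvc : HasCompactSupport v)
    (hvs : tsupport v ⊆ Ω) :
    ∫ x in Ω, fro (epsV v x) (σ x) = ∫ x in Ω, ∑ i, f x i * v x i := by
  have hvi : ∀ i, ContDiff ℝ 1 (fun x => v x i) := fun i => contDiff_pi.1 hv i
  have hts : ∀ i, tsupport (fun x => v x i) ⊆ tsupport v := fun i =>
    tsupport_comp_subset (g := fun w : Fin d → ℝ => w i) rfl v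
  have hgC : ∀ i j, ContDiff ℝ 1 (fun x => v x i * σ x i j) := fun i j =>
    contDiff_mul_of_tsupport_subset hΩ (hvi i) ((hts i).trans hvs) (hσ i j)
  have hgs : ∀ i j, tsupport (fun x => v x i * σ x i j) ⊆ tsupport v := fun i j =>
    (tsupport_mul_subset_left (f := fun x => v x i) (g := fun x => σ x i j)).trans (hts i)
  have hgc : ∀ i j, HasCompactSupport (fun x => v x i * σ x i j) := fun i j =>
    hvc.of_isClosed_subset (isClosed_tsupport _) (hgs i j)
  have hpt : ∀ x ∈ Ω, fro (epsV v x) (σ x) =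
      (∑ i, ∑ j, pd (fun y => v y i * σ y i j) x j) + ∑ i, f x i * v x i := by
    intro x hx
    rw [fro_epsV_of_symm v x (σ x) (hsymm x hx), fro, ← Finset.sum_add_distrib]
    refine Finset.sum_congr rfl fun i _ => ?_
    have hprod : ∀ j, pd (fun y => v y i * σ y i j) x j =
        v x i * pd (fun y => σ y i j) x j + jac v x i j * σ x i j := by
      intro j
      have h1 : DifferentiableAt ℝ (fun y => v y i) x := (hvi i).differentiable one_ne_zero x
      have h2 : DifferentiableAt ℝ (fun y => σ y i j) x :=
        ((hσ i j).contDiffAt (hΩ.mem_nhds hx)).differentiableAt one_ne_zero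
      simp only [pd, jac, fderiv_fun_mul h1 h2, add_apply, smul_apply, smul_eq_mul]
      ring
    have hd : ∑ j, pd (fun y => σ y i j) x j = -f x i := hmom x hx i
    simp only [hprod, Finset.sum_add_distrib, ← Finset.mul_sum, hd]
    ring
  have hsum : ∫ x in Ω, ∑ i, ∑ j, pd (fun y => v y i * σ y i j) x j = 0 := by
    rw [integral_finsetSum _ fun i _ =>
      integrable_finsetSum _ fun j _ => (integrable_pd (hgC i j) (hgc i j) j).integrableOn]
    refine Finset.sum_eq_zero fun i _ => ?_
    rw [integral_finsetSum _ fun j _ => (integrable_pd (hgC i j) (hgc i j) j).integrableOn]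
    refine Finset.sum_eq_zero fun j _ => ?_
    rw [setIntegral_eq_integral_of_forall_compl_eq_zero, integral_pd_eq_zero (hgC i j) (hgc i j)]
    intro x hx
    simp [pd, fderiv_of_notMem_tsupport ℝ fun h => hx (hvs (hgs i j h))]
  have hfv : IntegrableOn (fun x => ∑ i, f x i * v x i) Ω := by
    have hK : IntegrableOn (fun x => ∑ i, f x i * v x i) (tsupport v) := by
      refine ContinuousOn.integrableOn_compact hvc ?_
      refine continuousOn_finsetSum _ fun i _ => ?_
      exact (((continuous_apply i).comp_continuousOn hf).mono hvs).mul
        (hvi i).continuous.continuousOn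
    refine hK.of_forall_sdiff_eq_zero hΩ.measurableSet fun x hx => ?_
    simp [image_eq_zero_of_notMem_tsupport hx.2]
  rw [setIntegral_congr_fun hΩ.measurableSet hpt, integral_add _ hfv, hsum, zero_add]
  exact integrable_finsetSum _ fun i _ =>
    integrable_finsetSum _ fun j _ => (integrable_pd (hgC i j) (hgc i j) j).integrableOn

/-- Consistency of the augmented mixed formulation: if
`∇·σ = −f` and `Aσ = ν ε(u)` pointwise on `Ω`, then `σ` is symmetric on `Ω`,
`tr ε(u) = 0` on `Ω`, and `B_θ((σ,u),(τ,v)) = 2∫_Ω f·v − ∫_Ω (θ/ν) f·(∇·τ)`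
for every admissible pair `(τ,v)`. -/
theorem stmt_12 (d : ℕ) (Ω : Set (Fin d → ℝ)) (hΩ : IsOpen Ω)
    (ν θ : (Fin d → ℝ) → ℝ) (hνmeas : Measurable ν) (hθmeas : Measurable θ)
    (lam Lam θ₀ θ₁ : ℝ) (hlam : 0 < lam) (hνbd : ∀ x ∈ Ω, lam ≤ ν x ∧ ν x ≤ Lam)
    (hθ₀ : 0 < θ₀) (hθbd : ∀ x ∈ Ω, θ₀ ≤ θ x ∧ θ x ≤ θ₁)
    (σ : (Fin d → ℝ) → Fin d → Fin d → ℝ)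
    (hσ : ∀ i j, ContDiffOn ℝ 1 (fun x => σ x i j) Ω)
    (hσint : IntegrableOn (fun x => (ν x)⁻¹ * fro (σ x) (σ x)) Ω)
    (hσdiv : IntegrableOn (fun x => (θ x / ν x) * ∑ i, (divT σ x i) ^ 2) Ω)
    (u : (Fin d → ℝ) → Fin d → ℝ) (hu : ContDiffOn ℝ 1 u Ω)
    (huint : IntegrableOn (fun x => ν x * fro (jac u x) (jac u x)) Ω)
    (f : (Fin d → ℝ) → Fin d → ℝ) (hf : ContinuousOn f Ω)
    (hmom : ∀ x ∈ Ω, ∀ i, divT σ x i = -f x i)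
    (hconst : ∀ x ∈ Ω, ∀ i j, devM (σ x) i j = ν x * epsV u x i j) :
    (∀ x ∈ Ω, ∀ i j, σ x i j = σ x j i) ∧
      (∀ x ∈ Ω, ∑ i, epsV u x i i = 0) ∧
      (∀ (τ : (Fin d → ℝ) → Fin d → Fin d → ℝ) (v : (Fin d → ℝ) → Fin d → ℝ),
        Admissible Ω ν θ τ v →
          Bform Ω ν θ σ u τ v =
            2 * (∫ x in Ω, ∑ i, f x i * v x i)
              - ∫ x in Ω, (θ x / ν x) * ∑ i, f x i * divT τ x i) := by
  have hνpos : ∀ x ∈ Ω, 0 < ν x := fun x hx => hlam.trans_le (hνbd x hx).1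
  have hsymm : ∀ x ∈ Ω, ∀ i j, σ x i j = σ x j i := by
    intro x hx i j
    rcases eq_or_ne i j with rfl | hij
    · rfl
    · have h1 := hconst x hx i j
      have h2 := hconst x hx j i
      simp only [devM, hij, hij.symm, if_false, mul_zero, sub_zero] at h1 h2
      rw [h1, h2, epsV, epsV, add_comm]
  have htr : ∀ x ∈ Ω, ∑ i, epsV u x i i = 0 := by
    intro x hx
    have h := trace_devM (σ x)
    simp only [hconst x hx, ← Finset.mul_sum] at h
    exact (mul_eq_zero.1 h).resolve_left (hνpos x hx).ne'
  refine ⟨hsymm, htr, ?_⟩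
  rintro τ v ⟨-, hv, hvc, hvs, -, -, -, -⟩
  have hdev : ∀ x ∈ Ω, ∀ T, fro (devM (σ x)) T = ν x * fro (epsV u x) T := by
    intro x hx T
    simp only [fro, hconst x hx, Finset.mul_sum, mul_assoc]
  have e1 : ∫ x in Ω, (ν x)⁻¹ * fro (devM (σ x)) (τ x) = ∫ x in Ω, fro (epsV u x) (τ x) :=
    setIntegral_congr_fun hΩ.measurableSet fun x hx => by
      have := (hνpos x hx).ne'
      simp only [hdev x hx]
      field_simp
  have e4 : ∫ x in Ω, fro (devM (σ x)) (epsV v x) =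
      ∫ x in Ω, ν x * fro (epsV u x) (epsV v x) :=
    setIntegral_congr_fun hΩ.measurableSet fun x hx => hdev x hx _
  have e5 : ∫ x in Ω, fro (devM (τ x)) (epsV u x) = ∫ x in Ω, fro (epsV u x) (τ x) :=
    setIntegral_congr_fun hΩ.measurableSet fun x hx => by
      simp only [fro_devM_of_trace_zero _ _ (htr x hx), fro_comm (τ x)]
  have e7 : ∫ x in Ω, (θ x / ν x) * ∑ i, divT σ x i * divT τ x i =
      -∫ x in Ω, (θ x / ν x) * ∑ i, f x i * divT τ x i := by
    rw [← integral_neg]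
    refine setIntegral_congr_fun hΩ.measurableSet fun x hx => ?_
    simp only [hmom x hx, neg_mul, Finset.sum_neg_distrib, mul_neg]
  rw [Bform, e1, e4, e5, e7, integral_fro_epsV hΩ hσ hsymm hf hmom hv hvc hvs]
  ring
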